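/- Theorem 1 (certified robust accuracy): Let f^{w_1},…,f^{w_N} be K-layer feedforward networks of a common architecture with C = n_K output classes and monotone nondecreasing activation h, let ε ≥ 0, and let (x_1*, y_1*),…,(x_m*, y_m*) be test points with associated class labels. Define the robust accuracy ℛ_ε := (1/m) ∑_{i=1}^m 𝟙[ for every x̄ with ‖x_i* − x̄‖_∞ ≤ ε and every class c ≠ y_i*, Ê^N(x̄)_{y_i*} > Ê^N(x̄)_c ], and the IBP certified accuracy ℛ_ε^{IBP} := (1/m) ∑_{i=1}^m 𝟙[ Ê^{N,ε}_{y_i*,LB}(x_i*) > Ê^{N,ε}_{c,UB}(x_i*) for every class c ≠ y_i* ]. Then ℛ_ε ≥ ℛ_ε^{IBP}. -/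

import Mathlib

/-- Activations of a feedforward network: `netPhi … x 0 = x` (the input `φ_(0)`) and
`netPhi … x (k+1) = h (W_k (netPhi … x k) + b_k)` (the activation `φ_(k+1)`).
For a `K`-layer network only the values with `k ≤ K - 1` are used. -/
noncomputable def netPhi (n : ℕ → ℕ)
    (W : ∀ k : ℕ, Matrix (Fin (n (k + 1))) (Fin (n k)) ℝ)
    (b : ∀ k : ℕ, Fin (n (k + 1)) → ℝ) (h : ℝ → ℝ)
    (x : Fin (n 0) → ℝ) : (k : ℕ) → Fin (n k) → ℝ
  | 0 => x
  | (k + 1) => fun i => h (((W k).mulVec (netPhi n W b h x k) + b k) i)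

/-- Pre-activations: `netPre … x k = W_k φ_(k) + b_k`, i.e. the pre-activation
`f_(k+1)` of the network.  The output of a `K`-layer network is `f^w(x) = netPre … x (K-1)`. -/
noncomputable def netPre (n : ℕ → ℕ)
    (W : ∀ k : ℕ, Matrix (Fin (n (k + 1))) (Fin (n k)) ℝ)
    (b : ∀ k : ℕ, Fin (n (k + 1)) → ℝ) (h : ℝ → ℝ)
    (x : Fin (n 0) → ℝ) (k : ℕ) : Fin (n (k + 1)) → ℝ :=
  (W k).mulVec (netPhi n W b h x k) + b k

/-- Interval bound propagation on the activations: `ibpPhi … x ε k = (φ_(k)^L, φ_(k)^U)`.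
At `k = 0` the bounds are `x ∓ ε·𝟙`; at `k+1` they are `h (μ_{k+1} ∓ r_{k+1})` with
`μ_{k+1} = W_k (φ_(k)^U + φ_(k)^L)/2 + b_k` and `r_{k+1} = |W_k| (φ_(k)^U − φ_(k)^L)/2`. -/
noncomputable def ibpPhi (n : ℕ → ℕ)
    (W : ∀ k : ℕ, Matrix (Fin (n (k + 1))) (Fin (n k)) ℝ)
    (b : ∀ k : ℕ, Fin (n (k + 1)) → ℝ) (h : ℝ → ℝ)
    (x : Fin (n 0) → ℝ) (ε : ℝ) : (k : ℕ) → (Fin (n k) → ℝ) × (Fin (n k) → ℝ)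
  | 0 => (fun i => x i - ε, fun i => x i + ε)
  | (k + 1) =>
      let L := (ibpPhi n W b h x ε k).1
      let U := (ibpPhi n W b h x ε k).2
      let μ := (W k).mulVec (fun i => (U i + L i) / 2) + b k
      let r := (Matrix.of fun i j => |W k i j|).mulVec (fun i => (U i - L i) / 2)
      (fun i => h (μ i - r i), fun i => h (μ i + r i))

/-- Interval bound propagation on the pre-activations:
`ibpPre … x ε k = (f_(k+1)^L, f_(k+1)^U) = (μ_{k+1} − r_{k+1}, μ_{k+1} + r_{k+1})`.
The IBP output bounds of a `K`-layer network are `(f^{w,L,ε}, f^{w,U,ε}) = ibpPre … x ε (K-1)`. -/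
noncomputable def ibpPre (n : ℕ → ℕ)
    (W : ∀ k : ℕ, Matrix (Fin (n (k + 1))) (Fin (n k)) ℝ)
    (b : ∀ k : ℕ, Fin (n (k + 1)) → ℝ) (h : ℝ → ℝ)
    (x : Fin (n 0) → ℝ) (ε : ℝ) (k : ℕ) : (Fin (n (k + 1)) → ℝ) × (Fin (n (k + 1)) → ℝ) :=
  let L := (ibpPhi n W b h x ε k).1
  let U := (ibpPhi n W b h x ε k).2
  let μ := (W k).mulVec (fun i => (U i + L i) / 2) + b k
  let r := (Matrix.of fun i j => |W k i j|).mulVec (fun i => (U i - L i) / 2)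
  (fun i => μ i - r i, fun i => μ i + r i)

/-- Softmax probability of class `y` for logits `z ∈ ℝ^C`. -/
noncomputable def softmax {C : ℕ} (y : Fin C) (z : Fin C → ℝ) : ℝ :=
  Real.exp (z y) / ∑ j, Real.exp (z j)

/-- The corner vector `f_LB` with `(f_LB) y = L y` and `(f_LB) j = U j` for `j ≠ y`. -/
def cornerLB {C : ℕ} (y : Fin C) (L U : Fin C → ℝ) : Fin C → ℝ :=
  fun j => if j = y then L j else U j

/-- The corner vector `f_UB` with `(f_UB) c' = U c'` and `(f_UB) j = L j` for `j ≠ c'`. -/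
def cornerUB {C : ℕ} (c' : Fin C) (L U : Fin C → ℝ) : Fin C → ℝ :=
  fun j => if j = c' then U j else L j

/-- Empirical posterior predictor of `N` networks `f^{w_1},…,f^{w_N}` of the common
`K`-layer architecture given by `(n, Ws i, bs i, h)`:
`Ê^N(x) c = (1/N) ∑ i σ_c(f^{w_i}(x))`. -/
noncomputable def ensemblePred (n : ℕ → ℕ) (N K : ℕ)
    (Ws : Fin N → ∀ k : ℕ, Matrix (Fin (n (k + 1))) (Fin (n k)) ℝ)
    (bs : Fin N → ∀ k : ℕ, Fin (n (k + 1)) → ℝ) (h : ℝ → ℝ)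
    (x : Fin (n 0) → ℝ) (c : Fin (n (K - 1 + 1))) : ℝ :=
  (1 / (N : ℝ)) * ∑ i : Fin N, softmax c (netPre n (Ws i) (bs i) h x (K - 1))

/-- IBP lower bound on the empirical predictor for class `y` at `x` and radius `ε`:
`Ê^{N,ε}_{y,LB} = (1/N) ∑ i σ_y(f_LB^{w_i,ε}(x))`. -/
noncomputable def ensembleLB (n : ℕ → ℕ) (N K : ℕ)
    (Ws : Fin N → ∀ k : ℕ, Matrix (Fin (n (k + 1))) (Fin (n k)) ℝ)
    (bs : Fin N → ∀ k : ℕ, Fin (n (k + 1)) → ℝ) (h : ℝ → ℝ)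
    (x : Fin (n 0) → ℝ) (y : Fin (n (K - 1 + 1))) (ε : ℝ) : ℝ :=
  (1 / (N : ℝ)) * ∑ i : Fin N,
    softmax y (cornerLB y (ibpPre n (Ws i) (bs i) h x ε (K - 1)).1
      (ibpPre n (Ws i) (bs i) h x ε (K - 1)).2)

/-- IBP upper bound on the empirical predictor for class `c'` at `x` and radius `ε`:
`Ê^{N,ε}_{c',UB} = (1/N) ∑ i σ_{c'}(f_UB^{w_i,ε,c'}(x))`. -/
noncomputable def ensembleUB (n : ℕ → ℕ) (N K : ℕ)
    (Ws : Fin N → ∀ k : ℕ, Matrix (Fin (n (k + 1))) (Fin (n k)) ℝ)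
    (bs : Fin N → ∀ k : ℕ, Fin (n (k + 1)) → ℝ) (h : ℝ → ℝ)
    (x : Fin (n 0) → ℝ) (c' : Fin (n (K - 1 + 1))) (ε : ℝ) : ℝ :=
  (1 / (N : ℝ)) * ∑ i : Fin N,
    softmax c' (cornerUB c' (ibpPre n (Ws i) (bs i) h x ε (K - 1)).1
      (ibpPre n (Ws i) (bs i) h x ε (K - 1)).2)

/-!
An affine map `v ↦ W v + b` sends the box of center `c` and radius `r` into the box of center
`W c + b` and radius `|W| r`, and a monotone activation preserves boxes. By induction on the layer,
the logits of every network at every perturbed input lie in its IBP output box. On that box the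
softmax probability of a class, increasing in its own logit and decreasing in the others, is
extremal at the corners `f_LB` and `f_UB`; averaging over the networks gives
`Ê(x̄)_c ≤ Ê_{c,UB} < Ê_{y,LB} ≤ Ê(x̄)_y` at every certified test point.
-/

section BoxArithmetic

variable {ι κ R : Type*} [Fintype κ]

theorem abs_mulVec_le [Ring R] [LinearOrder R] [IsOrderedRing R]
    (W : Matrix ι κ R) (v : κ → R) : |W.mulVec v| ≤ (W.map abs).mulVec |v| := fun i =>
  calc |∑ j, W i j * v j|
      ≤ ∑ j, |W i j * v j| := Finset.abs_sum_le_sum_abs _ _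
    _ = ∑ j, |W i j| * |v j| := by simp only [abs_mul]

variable [Field R] [LinearOrder R] [IsStrictOrderedRing R]

theorem abs_mulVec_sub_mulVec_midpoint_le (W : Matrix ι κ R) {L U v : κ → R}
    (hv : v ∈ Set.Icc L U) :
    |W.mulVec v - W.mulVec (fun j => (U j + L j) / 2)| ≤
      (W.map abs).mulVec (fun j => (U j - L j) / 2) := by
  have distance_to_center (j : κ) : |v j - (U j + L j) / 2| ≤ (U j - L j) / 2 :=
    abs_le.mpr ⟨by linarith [hv.1 j], by linarith [hv.2 j]⟩
  rw [← Matrix.mulVec_sub]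
  refine (abs_mulVec_le W _).trans fun i => ?_
  exact dotProduct_le_dotProduct_of_nonneg_left distance_to_center fun j => abs_nonneg (W i j)

theorem mulVec_add_mem_Icc (W : Matrix ι κ R) (b : ι → R) {L U v : κ → R}
    (hv : v ∈ Set.Icc L U) :
    W.mulVec v + b ∈ Set.Icc
      (W.mulVec (fun j => (U j + L j) / 2) + b -
        (W.map abs).mulVec (fun j => (U j - L j) / 2))
      (W.mulVec (fun j => (U j + L j) / 2) + b +
        (W.map abs).mulVec (fun j => (U j - L j) / 2)) := by
  have deviation_le := abs_mulVec_sub_mulVec_midpoint_le W hv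
  rw [← add_sub_add_right_eq_sub _ _ b, abs_le', neg_sub] at deviation_le
  exact ⟨sub_le_comm.mp deviation_le.2, sub_le_iff_le_add'.mp deviation_le.1⟩

end BoxArithmetic

section IntervalBoundPropagation

variable {n : ℕ → ℕ} {W : ∀ k : ℕ, Matrix (Fin (n (k + 1))) (Fin (n k)) ℝ}
  {b : ∀ k : ℕ, Fin (n (k + 1)) → ℝ} {h : ℝ → ℝ} {x x' : Fin (n 0) → ℝ} {ε : ℝ}

theorem netPre_mem_Icc_ibpPre_of_netPhi_mem_Icc {k : ℕ}
    (hφ : netPhi n W b h x' k ∈ Set.Icc (ibpPhi n W b h x ε k).1 (ibpPhi n W b h x ε k).2) :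
    netPre n W b h x' k ∈ Set.Icc (ibpPre n W b h x ε k).1 (ibpPre n W b h x ε k).2 :=
  mulVec_add_mem_Icc (W k) (b k) hφ

theorem netPhi_mem_Icc_ibpPhi (hmono : Monotone h) (hx : ‖x - x'‖ ≤ ε) (k : ℕ) :
    netPhi n W b h x' k ∈ Set.Icc (ibpPhi n W b h x ε k).1 (ibpPhi n W b h x ε k).2 := by
  induction k with
  | zero =>
    have coordinate_bound (i : Fin (n 0)) : |x i - x' i| ≤ ε :=
      (norm_le_pi_norm (x - x') i).trans hx
    exact ⟨fun i => sub_le_comm.mp (abs_le.mp (coordinate_bound i)).2,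
      fun i => neg_le_sub_iff_le_add.mp (abs_le.mp (coordinate_bound i)).1⟩
  | succ k ih =>
    have hpre := netPre_mem_Icc_ibpPre_of_netPhi_mem_Icc ih
    exact ⟨fun i => hmono (hpre.1 i), fun i => hmono (hpre.2 i)⟩

theorem netPre_mem_Icc_ibpPre (hmono : Monotone h) (hx : ‖x - x'‖ ≤ ε) (k : ℕ) :
    netPre n W b h x' k ∈ Set.Icc (ibpPre n W b h x ε k).1 (ibpPre n W b h x ε k).2 :=
  netPre_mem_Icc_ibpPre_of_netPhi_mem_Icc (netPhi_mem_Icc_ibpPhi hmono hx k)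

end IntervalBoundPropagation

section Softmax

variable {C : ℕ} {y : Fin C}

theorem softmax_le_softmax {z z' : Fin C → ℝ} (hy : z y ≤ z' y)
    (hne : ∀ j, j ≠ y → z' j ≤ z j) : softmax y z ≤ softmax y z' := by
  have partition_pos (u : Fin C → ℝ) : 0 < ∑ j, Real.exp (u j) :=
    Finset.sum_pos (fun j _ => Real.exp_pos (u j)) ⟨y, Finset.mem_univ y⟩
  have exponent_le (j : Fin C) : z y + z' j ≤ z' y + z j := by
    obtain rfl | hj := eq_or_ne j y
    · exact (add_comm _ _).le
    · exact add_le_add hy (hne j hj)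
  unfold softmax
  rw [div_le_div_iff₀ (partition_pos z) (partition_pos z')]
  simp only [Finset.mul_sum, ← Real.exp_add]
  exact Finset.sum_le_sum fun j _ => Real.exp_le_exp.mpr (exponent_le j)

variable {L U z : Fin C → ℝ}

theorem softmax_cornerLB_le (hz : z ∈ Set.Icc L U) :
    softmax y (cornerLB y L U) ≤ softmax y z :=
  softmax_le_softmax ((if_pos rfl).trans_le (hz.1 y))
    fun j hj => (hz.2 j).trans_eq (if_neg hj).symm

theorem softmax_le_softmax_cornerUB (hz : z ∈ Set.Icc L U) :
    softmax y z ≤ softmax y (cornerUB y L U) :=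
  softmax_le_softmax ((hz.2 y).trans_eq (if_pos rfl).symm)
    fun j hj => (if_neg hj).trans_le (hz.1 j)

end Softmax

section Ensemble

variable {n : ℕ → ℕ} {N K : ℕ}
  {Ws : Fin N → ∀ k : ℕ, Matrix (Fin (n (k + 1))) (Fin (n k)) ℝ}
  {bs : Fin N → ∀ k : ℕ, Fin (n (k + 1)) → ℝ} {h : ℝ → ℝ} {x x' : Fin (n 0) → ℝ} {ε : ℝ}

theorem ensembleLB_le_ensemblePred (hmono : Monotone h) (hx : ‖x - x'‖ ≤ ε)
    (y : Fin (n (K - 1 + 1))) :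
    ensembleLB n N K Ws bs h x y ε ≤ ensemblePred n N K Ws bs h x' y := by
  unfold ensembleLB ensemblePred
  gcongr
  exact softmax_cornerLB_le (netPre_mem_Icc_ibpPre hmono hx (K - 1))

theorem ensemblePred_le_ensembleUB (hmono : Monotone h) (hx : ‖x - x'‖ ≤ ε)
    (c : Fin (n (K - 1 + 1))) :
    ensemblePred n N K Ws bs h x' c ≤ ensembleUB n N K Ws bs h x c ε := by
  unfold ensembleUB ensemblePred
  gcongr
  exact softmax_le_softmax_cornerUB (netPre_mem_Icc_ibpPre hmono hx (K - 1))

theorem ensemblePred_lt_of_ensembleUB_lt_ensembleLB (hmono : Monotone h) (hx : ‖x - x'‖ ≤ ε)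
    {c y : Fin (n (K - 1 + 1))}
    (hcert : ensembleUB n N K Ws bs h x c ε < ensembleLB n N K Ws bs h x y ε) :
    ensemblePred n N K Ws bs h x' c < ensemblePred n N K Ws bs h x' y :=
  calc ensemblePred n N K Ws bs h x' c
      ≤ ensembleUB n N K Ws bs h x c ε := ensemblePred_le_ensembleUB hmono hx c
    _ < ensembleLB n N K Ws bs h x y ε := hcert
    _ ≤ ensemblePred n N K Ws bs h x' y := ensembleLB_le_ensemblePred hmono hx y

end Ensemble

/-- Theorem 1, certified robust accuracy: for test points
`(x_1*, y_1*),…,(x_m*, y_m*)` the robust accuracy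
`ℛ_ε = (1/m) ∑ i 𝟙[∀ x̄ ∈ B_∞(x_i*,ε), ∀ c ≠ y_i*, Ê^N(x̄)_{y_i*} > Ê^N(x̄)_c]`
is lower bounded by the IBP certified accuracy
`ℛ_ε^{IBP} = (1/m) ∑ i 𝟙[∀ c ≠ y_i*, Ê^{N,ε}_{y_i*,LB}(x_i*) > Ê^{N,ε}_{c,UB}(x_i*)]`. -/
theorem certified_robust_accuracy (n : ℕ → ℕ) (N K : ℕ) (hK : 1 ≤ K)
    (Ws : Fin N → ∀ k : ℕ, Matrix (Fin (n (k + 1))) (Fin (n k)) ℝ)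
    (bs : Fin N → ∀ k : ℕ, Fin (n (k + 1)) → ℝ) (h : ℝ → ℝ) (hmono : Monotone h)
    (ε : ℝ) (hε : 0 ≤ ε) (m : ℕ)
    (xs : Fin m → Fin (n 0) → ℝ) (ys : Fin m → Fin (n (K - 1 + 1))) :
    (1 / (m : ℝ)) * ∑ i : Fin m,
        Set.indicator {j : Fin m | ∀ c : Fin (n (K - 1 + 1)), c ≠ ys j →
            ensembleUB n N K Ws bs h (xs j) c ε <
              ensembleLB n N K Ws bs h (xs j) (ys j) ε}
          (fun _ => (1 : ℝ)) i ≤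
      (1 / (m : ℝ)) * ∑ i : Fin m,
        Set.indicator {j : Fin m | ∀ xbar : Fin (n 0) → ℝ, ‖xs j - xbar‖ ≤ ε →
            ∀ c : Fin (n (K - 1 + 1)), c ≠ ys j →
              ensemblePred n N K Ws bs h xbar c <
                ensemblePred n N K Ws bs h xbar (ys j)}
          (fun _ => (1 : ℝ)) i := by
  gcongr
  intro certified xbar hx c hc
  exact ensemblePred_lt_of_ensembleUB_lt_ensembleLB hmono hx (certified c hc)
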